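/- Let (α_k)_{k≥1} be the increasing enumeration of the moduli of the zeros of U₋ on the open ray arg z = π/3, and set ε_k = (√3·α_k/2)³. Then for every k ≥ 1 the function y(x) = U₋(ε_k^{1/3}·(1/√3 − i·x)) (with ε_k^{1/3} the real cube root) satisfies y(-1) = y(1) = 0, is not identically zero on [-1,1], and satisfies -ε_k^{-1}·y''(x) + i·x·y(x) = (1/√3)·y(x) for all x. In particular, 1/√3 is an eigenvalue of the model operator T(ε_k) with this explicit eigenfunction. -/

import Mathlib

open Complex MeasureTheory Real

noncomputable section

/-- `w` is an entire solution of the Airy equation `w'' = z·w`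
with prescribed (real) values of `w` and `w'` at the origin. -/
def IsAiry (w : ℂ → ℂ) (w0 w0' : ℝ) : Prop :=
  Differentiable ℂ w ∧ Differentiable ℂ (deriv w) ∧
  (∀ z : ℂ, deriv (deriv w) z = z * w z) ∧
  w 0 = (w0 : ℂ) ∧ deriv w 0 = (w0' : ℂ)

/-- `Ai` is the standard Airy function of the first kind. -/
def IsAiryAi (Ai : ℂ → ℂ) : Prop :=
  IsAiry Ai ((3 : ℝ) ^ (-(2 : ℝ)/3) / Real.Gamma (2/3))
    (-((3 : ℝ) ^ (-(1 : ℝ)/3)) / Real.Gamma (1/3))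

/-- `Bi` is the standard Airy function of the second kind. -/
def IsAiryBi (Bi : ℂ → ℂ) : Prop :=
  IsAiry Bi ((3 : ℝ) ^ (-(1 : ℝ)/6) / Real.Gamma (2/3))
    ((3 : ℝ) ^ ((1 : ℝ)/6) / Real.Gamma (1/3))

/-- `U₋ = -√3·Ai + Bi`. -/
def Uminus (Ai Bi : ℂ → ℂ) : ℂ → ℂ := fun z => -(Real.sqrt 3 : ℂ) * Ai z + Bi z

/-- `U₊ = √3·Ai + Bi`. -/
def Uplus (Ai Bi : ℂ → ℂ) : ℂ → ℂ := fun z => (Real.sqrt 3 : ℂ) * Ai z + Bi z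

/-- The moduli of the zeros of `U` on the open ray `arg z = π/3`. -/
def rayZeroModuli (U : ℂ → ℂ) : Set ℝ :=
  {r : ℝ | 0 < r ∧ U ((r : ℂ) * Complex.exp ((π/3 : ℝ) * Complex.I)) = 0}

/-- `lam` is an eigenvalue of the model operator `T(ε) y = -ε⁻¹ y'' + i x y`
with Dirichlet boundary conditions on `[-1,1]`. -/
def IsModelEigenvalue (ε : ℝ) (lam : ℂ) : Prop :=
  ∃ y : ℝ → ℂ, ContDiff ℝ 2 y ∧
    (∃ x ∈ Set.Icc (-1 : ℝ) 1, y x ≠ 0) ∧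
    (∀ x ∈ Set.Ioo (-1 : ℝ) 1,
      -(ε⁻¹ : ℂ) * deriv (deriv y) x + Complex.I * (x : ℂ) * y x = lam * y x) ∧
    y (-1) = 0 ∧ y 1 = 0

/-- The Airy equation `w'' = z·w` for an entire function `w`. -/
def SolvesAiry (w : ℂ → ℂ) : Prop :=
  Differentiable ℂ w ∧ Differentiable ℂ (deriv w) ∧ ∀ z : ℂ, deriv (deriv w) z = z * w z

namespace SolvesAiry

variable {w w₁ w₂ : ℂ → ℂ}

lemma hasDerivAt (h : SolvesAiry w) (z : ℂ) : HasDerivAt w (deriv w z) z :=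
  (h.1 z).hasDerivAt

lemma hasDerivAt_deriv (h : SolvesAiry w) (z : ℂ) : HasDerivAt (deriv w) (z * w z) z :=
  h.2.2 z ▸ (h.2.1 z).hasDerivAt

lemma of_hasDerivAt {w' : ℂ → ℂ} (h : ∀ z, HasDerivAt w (w' z) z)
    (h' : ∀ z, HasDerivAt w' (z * w z) z) : SolvesAiry w := by
  have e : deriv w = w' := funext fun z => (h z).deriv
  exact ⟨fun z => (h z).differentiableAt, e ▸ fun z => (h' z).differentiableAt,
    e ▸ fun z => (h' z).deriv⟩

lemma linearCombination (h₁ : SolvesAiry w₁) (h₂ : SolvesAiry w₂) (a b : ℂ) :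
    SolvesAiry fun z => a * w₁ z + b * w₂ z := by
  refine of_hasDerivAt
    (fun z => ((h₁.hasDerivAt z).const_mul a).add ((h₂.hasDerivAt z).const_mul b)) fun z => ?_
  exact (((h₁.hasDerivAt_deriv z).const_mul a).add
    ((h₂.hasDerivAt_deriv z).const_mul b)).congr_deriv (by ring)

/-- The Airy equation is invariant under rotation by a cube root of unity. -/
lemma rotate (h : SolvesAiry w) {ω : ℂ} (hω : ω ^ 3 = 1) : SolvesAiry fun z => w (ω * z) := by
  have hm (z : ℂ) : HasDerivAt (fun z => ω * z) ω z := by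
    simpa using (hasDerivAt_id z).const_mul ω
  refine of_hasDerivAt (fun z => (h.hasDerivAt (ω * z)).comp z (hm z)) fun z => ?_
  refine (((h.hasDerivAt_deriv (ω * z)).comp z (hm z)).mul_const ω).congr_deriv ?_
  linear_combination (z * w (ω * z)) * hω

/-- Every derivative of a solution is a polynomial combination of `w` and `w'`. -/
lemma iteratedDeriv_eq (h : SolvesAiry w) (n : ℕ) :
    ∃ p q : Polynomial ℂ, iteratedDeriv n w = fun z => p.eval z * w z + q.eval z * deriv w z := by
  induction n with
  | zero => exact ⟨1, 0, by simp⟩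
  | succ n ih =>
    obtain ⟨p, q, hpq⟩ := ih
    refine ⟨p.derivative + q * Polynomial.X, p + q.derivative, ?_⟩
    funext z
    rw [iteratedDeriv_succ, hpq]
    refine HasDerivAt.deriv ?_
    refine (((p.hasDerivAt z).mul (h.hasDerivAt z)).add
      ((q.hasDerivAt z).mul (h.hasDerivAt_deriv z))).congr_deriv ?_
    simp only [Polynomial.eval_add, Polynomial.eval_mul, Polynomial.eval_X]
    ring

lemma eq_zero (h : SolvesAiry w) {a : ℂ} (h0 : w a = 0) (h1 : deriv w a = 0) (z : ℂ) :
    w z = 0 := by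
  rw [← Complex.taylorSeries_eq_of_entire h.1 a z]
  refine (tsum_congr fun n => ?_).trans tsum_zero
  obtain ⟨p, q, hpq⟩ := h.iteratedDeriv_eq n
  simp [hpq, h0, h1]

/-- A solution vanishing at the origin commutes with rotation by a cube root of unity. -/
lemma map_rotate (h : SolvesAiry w) (h0 : w 0 = 0) {ω : ℂ} (hω : ω ^ 3 = 1) (z : ℂ) :
    w (ω * z) = ω * w z := by
  have key := (h.rotate hω).linearCombination h 1 (-ω)
  have hm : HasDerivAt (fun z => ω * z) ω 0 := by
    simpa using (hasDerivAt_id (0 : ℂ)).const_mul ω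
  have hd := (((h.hasDerivAt (ω * 0)).comp 0 hm).const_mul 1).add
    ((h.hasDerivAt 0).const_mul (-ω))
  have := key.eq_zero (a := 0) (by simp [h0]) (hd.deriv.trans (by simp; ring)) z
  linear_combination this

end SolvesAiry

lemma IsAiry.solvesAiry {w : ℂ → ℂ} {w0 w0' : ℝ} (h : IsAiry w w0 w0') : SolvesAiry w :=
  ⟨h.1, h.2.1, h.2.2.1⟩

section Uminus

variable {Ai Bi : ℂ → ℂ}

lemma solvesAiry_Uminus (hAi : IsAiryAi Ai) (hBi : IsAiryBi Bi) : SolvesAiry (Uminus Ai Bi) := by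
  simpa only [Uminus, one_mul] using! hAi.solvesAiry.linearCombination hBi.solvesAiry (-(Real.sqrt 3 : ℂ)) 1

lemma Uminus_zero (hAi : IsAiryAi Ai) (hBi : IsAiryBi Bi) : Uminus Ai Bi 0 = 0 := by
  have e : Real.sqrt 3 * (3 : ℝ) ^ (-(2 : ℝ)/3) = (3 : ℝ) ^ (-(1 : ℝ)/6) := by
    rw [Real.sqrt_eq_rpow, ← Real.rpow_add (by norm_num)]
    norm_num
  rw [Uminus, hAi.2.2.2.1, hBi.2.2.2.1]
  rw [← e]
  push_cast
  ring

lemma deriv_Uminus_zero_ne_zero (hAi : IsAiryAi Ai) (hBi : IsAiryBi Bi) :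
    deriv (Uminus Ai Bi) 0 ≠ 0 := by
  have hd : deriv (Uminus Ai Bi) 0 = -(Real.sqrt 3 : ℂ) * deriv Ai 0 + deriv Bi 0 :=
    (((hAi.1 0).hasDerivAt.const_mul _).add (hBi.1 0).hasDerivAt).deriv
  rw [hd, hAi.2.2.2.2, hBi.2.2.2.2]
  have hΓ : 0 < Real.Gamma (1/3) := Real.Gamma_pos_of_pos (by norm_num)
  have : 0 < -Real.sqrt 3 * (-((3 : ℝ) ^ (-(1 : ℝ)/3)) / Real.Gamma (1/3)) +
      (3 : ℝ) ^ ((1 : ℝ)/6) / Real.Gamma (1/3) := by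
    rw [neg_div, neg_mul_neg]
    positivity
  exact_mod_cast Complex.ofReal_ne_zero.mpr this.ne'

end Uminus

lemma exp_pi_div_three_mul_I :
    Complex.exp ((π/3 : ℝ) * Complex.I) = 1 / 2 + (Real.sqrt 3 : ℂ) / 2 * Complex.I := by
  rw [Complex.exp_mul_I, ← Complex.ofReal_cos, ← Complex.ofReal_sin, Real.cos_pi_div_three,
    Real.sin_pi_div_three]
  push_cast
  ring

/-- For `ε_k = (√3·α_k/2)³` (where `(α k)` enumerates, increasingly, the moduli of the zeros
of `U₋` on the ray `arg z = π/3`, indexed from `0`), the function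
`y(x) = U₋(ε_k^{1/3}(1/√3 − i x))` is an explicit eigenfunction of the model operator
`T(ε_k)` with eigenvalue `1/√3`. -/
theorem explicit_eigenfunction_at_epsilon (Ai Bi : ℂ → ℂ)
    (hAi : IsAiryAi Ai) (hBi : IsAiryBi Bi)
    (α : ℕ → ℝ) (hmono : StrictMono α)
    (hrange : Set.range α = rayZeroModuli (Uminus Ai Bi)) (k : ℕ) :
    ∀ ε : ℝ, ε = (Real.sqrt 3 * α k / 2) ^ 3 →
    ∀ y : ℝ → ℂ, y = (fun x : ℝ =>
        Uminus Ai Bi (((ε ^ ((1:ℝ)/3) : ℝ) : ℂ) *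
          (1 / (Real.sqrt 3 : ℂ) - Complex.I * (x : ℂ)))) →
      y (-1) = 0 ∧ y 1 = 0 ∧ (∃ x ∈ Set.Icc (-1 : ℝ) 1, y x ≠ 0) ∧
      (∀ x : ℝ, -(ε⁻¹ : ℂ) * deriv (deriv y) x + Complex.I * (x : ℂ) * y x
        = (1 / (Real.sqrt 3 : ℂ)) * y x) ∧
      IsModelEigenvalue ε (1 / (Real.sqrt 3 : ℂ)) := by
  rintro ε hε y hy
  obtain ⟨hα, hU⟩ : α k ∈ rayZeroModuli (Uminus Ai Bi) := hrange ▸ Set.mem_range_self k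
  set U := Uminus Ai Bi with hUdef
  have hS : SolvesAiry U := solvesAiry_Uminus hAi hBi
  set c : ℝ := Real.sqrt 3 * α k / 2 with hc
  have hcpos : 0 < c := by positivity
  have hroot : ε ^ ((1 : ℝ)/3) = c := by
    rw [hε, ← Real.rpow_natCast, ← Real.rpow_mul hcpos.le]
    norm_num
  have hs : (Real.sqrt 3 : ℂ) ^ 2 = 3 := by
    norm_cast
    simp
  have hs0 : (Real.sqrt 3 : ℂ) ≠ 0 := by
    intro h
    simp [h] at hs
  have hc0 : (c : ℂ) ≠ 0 := by exact_mod_cast hcpos.ne'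
  have hcc : (c : ℂ) = Real.sqrt 3 * α k / 2 := by rw [hc]; push_cast; ring
  rw [hroot] at hy
  rw [exp_pi_div_three_mul_I] at hU
  have hleft : y (-1) = 0 := by
    rw [hy, ← hU]
    simp only [hcc]
    congr 1
    push_cast
    field_simp
    ring
  have hright : y 1 = 0 := by
    have hω : (-(1 / 2) - (Real.sqrt 3 : ℂ) / 2 * Complex.I) ^ 3 = 1 := by
      linear_combination
        (-(3 / 8) * Complex.I ^ 2 - (Real.sqrt 3 : ℂ) / 8 * Complex.I ^ 3) * hs +
        (-(9 / 8) - 3 / 8 * (Real.sqrt 3 : ℂ) * Complex.I) * Complex.I_sq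
    have := hS.map_rotate (Uminus_zero hAi hBi) hω
      ((α k : ℂ) * (1 / 2 + (Real.sqrt 3 : ℂ) / 2 * Complex.I))
    rw [hU, mul_zero] at this
    rw [hy, ← this]
    simp only [hcc]
    congr 1
    push_cast
    field_simp
    linear_combination (α k : ℂ) * ((Real.sqrt 3 : ℂ) ^ 2 * Complex.I_sq - hs)
  have hinner (z : ℂ) : HasDerivAt (fun z : ℂ => (c : ℂ) * (1 / (Real.sqrt 3 : ℂ) - Complex.I * z))
      (-(c * Complex.I)) z := by
    simpa using (((hasDerivAt_id z).const_mul Complex.I).const_sub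
      (1 / (Real.sqrt 3 : ℂ))).const_mul (c : ℂ)
  have hy1 (x : ℝ) : HasDerivAt y
      (deriv U (c * (1 / (Real.sqrt 3 : ℂ) - Complex.I * x)) * (-(c * Complex.I))) x := by
    rw [hy]
    exact ((hS.hasDerivAt _).comp (x : ℂ) (hinner x)).comp_ofReal
  have hdy : deriv y = fun x : ℝ =>
      deriv U (c * (1 / (Real.sqrt 3 : ℂ) - Complex.I * x)) * (-(c * Complex.I)) :=
    funext fun x => (hy1 x).deriv
  have hy2 (x : ℝ) : deriv (deriv y) x =
      (c * (1 / (Real.sqrt 3 : ℂ) - Complex.I * x)) * y x * (-(c * Complex.I)) *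
        (-(c * Complex.I)) := by
    rw [hdy, hy]
    exact ((((hS.hasDerivAt_deriv _).comp (x : ℂ) (hinner x)).mul_const _).comp_ofReal).deriv
  have hode (x : ℝ) : -(ε⁻¹ : ℂ) * deriv (deriv y) x + Complex.I * (x : ℂ) * y x
      = (1 / (Real.sqrt 3 : ℂ)) * y x := by
    rw [hy2, hε]
    push_cast
    field_simp
    linear_combination (-(1 - Real.sqrt 3 * Complex.I * x) * y x) * Complex.I_sq
  have hne : ∃ x ∈ Set.Icc (-1 : ℝ) 1, y x ≠ 0 := by
    by_contra! h
    have hev : y =ᶠ[nhds 0] fun _ => 0 := by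
      filter_upwards [Icc_mem_nhds (show (-1 : ℝ) < 0 by norm_num) one_pos] with x hx using h x hx
    have h0 : y 0 = 0 := hev.self_of_nhds
    have h1 : deriv y 0 = 0 := by rw [hev.deriv_eq, deriv_const]
    rw [hdy] at h1
    rw [hy] at h0
    have hd : deriv U (c * (1 / (Real.sqrt 3 : ℂ) - Complex.I * (0 : ℝ))) = 0 :=
      (mul_eq_zero.mp h1).resolve_right (by simp [hc0])
    have hzero : U = fun _ => 0 := funext (hS.eq_zero h0 hd)
    refine deriv_Uminus_zero_ne_zero hAi hBi ?_
    rw [← hUdef, hzero, deriv_const]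
  have hsmooth : ContDiff ℝ 2 y := by
    rw [hy]
    have hUs : ContDiff ℝ 2 U := hS.1.contDiff.restrict_scalars ℝ
    exact hUs.comp (contDiff_const.mul (contDiff_const.sub
      (contDiff_const.mul Complex.ofRealCLM.contDiff)))
  exact ⟨hleft, hright, hne, hode, y, hsmooth, hne, fun x _ => hode x, hleft, hright⟩
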